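/- Let p be a prime, D a PID in which p is prime, and (N,+,∘) a D-brace of order a power of p with rank_D N < p − 1. Then for every i ≥ 0, Ω_{i+1}(N,+) \ Ω_i(N,+) ⊆ Ω_{i+1}(N,∘) \ Ω_i(N,∘), where Ω_i(G) denotes the set of elements of order dividing p^i. Consequently (N,+) and (N,∘) have the same number of elements of each order, and if (N,∘) is abelian then (N,+) ≅ (N,∘). -/

import Mathlib

/-- A (left) brace structure on an abelian group `N`. -/
structure BraceStruct (N : Type*) [AddCommGroup N] where
  circ : N → N → N
  cinv : N → N
  circ_assoc : ∀ x y z, circ (circ x y) z = circ x (circ y z)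
  zero_circ : ∀ x, circ 0 x = x
  circ_zero : ∀ x, circ x 0 = x
  cinv_circ : ∀ x, circ (cinv x) x = 0
  circ_cinv : ∀ x, circ x (cinv x) = 0
  brace : ∀ x y z, circ x (y + z) = circ x y - x + circ x z

/-- The gamma function of a brace: γ_x(y) = -x + x∘y. -/
def BraceStruct.gamma {N : Type*} [AddCommGroup N] (B : BraceStruct N)
    (x y : N) : N := -x + B.circ x y

/-- A brace whose additive group is an `R`-module is an `R`-brace when every
γ_x is an `R`-module automorphism (equivalently, is `R`-linear). -/
def BraceStruct.IsRBrace (R : Type*) {N : Type*} [Ring R] [AddCommGroup N]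
    [Module R N] (B : BraceStruct N) : Prop :=
  ∀ (x : N) (r : R) (y : N), B.gamma x (r • y) = r • B.gamma x y

/-- The m-fold ∘-power m_∘ a = a ∘ a ∘ ⋯ ∘ a (m factors). -/
def BraceStruct.circPow {N : Type*} [AddCommGroup N] (B : BraceStruct N) :
    ℕ → N → N
  | 0, _ => 0
  | n + 1, a => B.circ a (B.circPow n a)


theorem aux_struct {G : Type*} [AddCommGroup G] [Finite G] (p m : ℕ) (hp : p.Prime)
    (hG : ∀ g : G, p ^ m • g = 0) :
    ∃ (ι : Type) (_ : Fintype ι) (e : ι → ℕ), (∀ i, 1 ≤ e i) ∧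
      Nonempty (G ≃+ ((i : ι) → ZMod (p ^ e i))) := by
  classical
  obtain ⟨ι, hι, n, hn, ⟨f⟩⟩ := AddCommGroup.equiv_directSum_zmod_of_finite' G
  let g := f.trans (DirectSum.addEquivProd (fun i => ZMod (n i)))
  have hdvd : ∀ i, n i ∣ p ^ m := by
    intro i
    have h1 := hG (g.symm (Pi.single i 1))
    have h2 := congrArg g h1
    rw [map_nsmul, g.apply_symm_apply, map_zero] at h2
    have h3 := congrFun h2 i
    simp only [Pi.smul_apply, Pi.single_eq_same, Pi.zero_apply, nsmul_eq_mul, mul_one] at h3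
    exact (ZMod.natCast_eq_zero_iff _ _).1 h3
  have hex : ∀ i, ∃ k, n i = p ^ k := fun i => by
    obtain ⟨k, _, hk⟩ := (Nat.dvd_prime_pow hp).1 (hdvd i)
    exact ⟨k, hk⟩
  choose e he using hex
  obtain rfl : n = fun i => p ^ e i := funext he
  refine ⟨ι, hι, e, fun i => ?_, ⟨g⟩⟩
  by_contra h
  have h0 : e i = 0 := by omega
  have := hn i
  simp [h0] at this

theorem aux_card {G : Type*} [AddCommGroup G] (p : ℕ) (hp : p.Prime)
    {ι : Type} [Fintype ι] (e : ι → ℕ) (g : G ≃+ ((i : ι) → ZMod (p ^ e i))) (k : ℕ) :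
    Set.ncard {a : G | p ^ k • a = 0} = p ^ (∑ i, min (e i) k) := by
  have : ∀ i, NeZero (p ^ e i) := fun i => ⟨pow_ne_zero _ hp.ne_zero⟩
  have h1 : {a : G | p ^ k • a = 0} ≃
      ((i : ι) → (nsmulAddMonoidHom (p ^ k) : ZMod (p ^ e i) →+ _).ker) :=
    { toFun := fun a i => ⟨g a.1 i, by
        have := congrFun (congrArg g a.2) i
        rw [map_nsmul, map_zero] at this
        exact this⟩
      invFun := fun b => ⟨g.symm (fun i => (b i).1), by
        show p ^ k • _ = _
        rw [← map_nsmul, AddEquiv.map_eq_zero_iff]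
        funext i
        exact (b i).2⟩
      left_inv := fun a => by simp
      right_inv := fun b => by simp }
  rw [← Nat.card_coe_set_eq, Nat.card_congr h1, Nat.card_pi, ← Finset.prod_pow_eq_pow_sum]
  refine Finset.prod_congr rfl fun i _ => ?_
  rw [IsAddCyclic.card_nsmulAddMonoidHom_ker, Nat.card_zmod]
  rcases le_total (e i) k with h | h
  · rw [min_eq_left h, Nat.gcd_eq_left (pow_dvd_pow p h)]
  · rw [min_eq_right h, Nat.gcd_eq_right (pow_dvd_pow p h)]

theorem aux_comb {ι κ : Type} [Fintype ι] [Fintype κ] (e : ι → ℕ) (f : κ → ℕ)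
    (he : ∀ i, 1 ≤ e i) (hf : ∀ i, 1 ≤ f i)
    (h : ∀ k, ∑ i, min (e i) k = ∑ i, min (f i) k) :
    ∃ σ : ι ≃ κ, ∀ i, f (σ i) = e i := by
  classical
  have key : ∀ {τ : Type} [Fintype τ] (u : τ → ℕ) (k : ℕ),
      2 * ∑ i, min (u i) (k+1) = ∑ i, min (u i) k + ∑ i, min (u i) (k+2)
        + Fintype.card {i // u i = k + 1} := by
    intro τ _ u k
    rw [Fintype.card_subtype, Finset.card_filter, Finset.mul_sum, ← Finset.sum_add_distrib,
      ← Finset.sum_add_distrib]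
    refine Finset.sum_congr rfl fun i _ => ?_
    split_ifs <;> omega
  have hc : ∀ k, Fintype.card {i // e i = k} = Fintype.card {i // f i = k} := by
    intro k
    cases k with
    | zero =>
      have : IsEmpty {i // e i = 0} := ⟨fun i => by have := he i.1; have := i.2; omega⟩
      have : IsEmpty {i // f i = 0} := ⟨fun i => by have := hf i.1; have := i.2; omega⟩
      simp
    | succ k =>
      have h1 := key e k
      have h2 := key f k
      rw [h, h, h] at h1
      omega
  exact ⟨Equiv.ofFiberEquiv (fun k => Fintype.equivOfCardEq (hc k)),
    fun i => Equiv.ofFiberEquiv_map _ i⟩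

theorem aux_iso {G H : Type*} [AddCommGroup G] [AddCommGroup H] [Finite G] [Finite H]
    (p m : ℕ) (hp : p.Prime)
    (hG : ∀ g : G, p ^ m • g = 0) (hH : ∀ g : H, p ^ m • g = 0)
    (h : ∀ i : ℕ, Set.ncard {a : G | p ^ i • a = 0} = Set.ncard {a : H | p ^ i • a = 0}) :
    Nonempty (G ≃+ H) := by
  obtain ⟨ι, _, e, he, ⟨u⟩⟩ := aux_struct p m hp hG
  obtain ⟨κ, _, f, hf, ⟨v⟩⟩ := aux_struct p m hp hH
  obtain ⟨σ, hσ⟩ := aux_comb e f he hf (fun k => by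
    have := h k
    rw [aux_card p hp e u, aux_card p hp f v] at this
    exact Nat.pow_right_injective hp.two_le this)
  have w : ((i : ι) → ZMod (p ^ e i)) ≃+ ((j : κ) → ZMod (p ^ f j)) :=
    (AddEquiv.piCongrRight (fun i =>
      (ZMod.ringEquivCongr (by rw [hσ i]) : ZMod (p ^ e i) ≃+* ZMod (p ^ f (σ i))).toAddEquiv)).trans
      (RingEquiv.piCongrLeft (fun j => ZMod (p ^ f j)) σ).toAddEquiv
  exact ⟨u.trans (w.trans v.symm)⟩

theorem aux_nil {K V : Type*} [Field K] [AddCommGroup V] [Module K V] [Module.Finite K V]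
    (f : Module.End K V) (hf : IsNilpotent f) (r : ℕ) (hr : Module.finrank K V ≤ r) :
    f ^ r = 0 := by
  have h := LinearMap.aeval_self_charpoly f
  rw [hf.charpoly_eq_X_pow_finrank, map_pow, Polynomial.aeval_X] at h
  exact pow_eq_zero_of_le hr h

theorem aux_rank {D : Type*} [CommRing D] [IsDomain D] [IsPrincipalIdealRing D]
    (q : D) (hq : Prime q) {N : Type*} [AddCommGroup N] [Module D N] (r : ℕ)
    (π : (Fin r → D) →ₗ[D] N) (hπ : Function.Surjective π) (M : Submodule D N)
    (f : Module.End D M) (hf : IsNilpotent f) (x : M) : ∃ y : M, (f ^ r) x = q • y := by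
  classical
  let I : Ideal D := Ideal.span {q}
  have hmax : I.IsMaximal :=
    IsPrime.to_maximal_ideal (hpi := (Ideal.span_singleton_prime hq.ne_zero).2 hq)
      (by simpa [I, Ideal.span_singleton_eq_bot] using hq.ne_zero)
  let _ : Field (D ⧸ I) := Ideal.Quotient.field I
  let P : Submodule D M := I • ⊤
  have hsurj : Function.Surjective (algebraMap D (D ⧸ I)) := Ideal.Quotient.mk_surjective
  have hfP : P ≤ P.comap f := by
    show I • ⊤ ≤ _
    rw [Submodule.smul_le]
    intro a ha n _
    show f (a • n) ∈ P
    rw [map_smul]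
    exact Submodule.smul_mem_smul ha trivial
  let F : Module.End D (M ⧸ P) := P.mapQ P f hfP
  let Fb : Module.End (D ⧸ I) (M ⧸ P) := LinearMap.extendScalarsOfSurjective hsurj F
  have hFpow : ∀ (k : ℕ) (z : M), (Fb ^ k) (P.mkQ z) = P.mkQ ((f ^ k) z) := by
    intro k
    induction k with
    | zero => intro z; simp
    | succ k ih =>
      intro z
      rw [pow_succ, pow_succ, Module.End.mul_apply, Module.End.mul_apply, ← ih]
      rfl
  have hFnil : IsNilpotent Fb := by
    obtain ⟨k, hk⟩ := hf
    refine ⟨k, ?_⟩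
    refine LinearMap.ext fun z => ?_
    obtain ⟨z, rfl⟩ := P.mkQ_surjective z
    rw [hFpow, hk, LinearMap.zero_apply, map_zero, LinearMap.zero_apply]
  -- generators
  let M' : Submodule D (Fin r → D) := M.comap π
  let b := Module.finBasis D M'
  have hs : Module.finrank D M' ≤ r := by
    simpa using M'.finrank_le
  let ρ : M' →ₗ[D] M := π.restrict (fun x hx => hx)
  have hρ : Function.Surjective ρ := by
    rintro ⟨y, hy⟩
    obtain ⟨z, rfl⟩ := hπ y
    exact ⟨⟨z, hy⟩, rfl⟩
  let v : Fin (Module.finrank D M') → M ⧸ P := fun i => P.mkQ (ρ (b i))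
  have hv : Submodule.span D (Set.range v) = ⊤ := by
    have : Set.range v = (P.mkQ ∘ₗ ρ) '' Set.range b := by
      rw [← Set.range_comp]; rfl
    rw [this, Submodule.span_image, b.span_eq, Submodule.map_top, LinearMap.range_eq_top]
    exact P.mkQ_surjective.comp hρ
  have hv' : Submodule.span (D ⧸ I) (Set.range v) = ⊤ := by
    rw [eq_top_iff]
    intro z _
    have : z ∈ Submodule.span D (Set.range v) := by rw [hv]; trivial
    exact Submodule.span_le_restrictScalars D (D ⧸ I) _ this
  have hfin : Module.Finite (D ⧸ I) (M ⧸ P) := ⟨⟨(Set.finite_range v).toFinset, by simpa using hv'⟩⟩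
  have hrk : Module.finrank (D ⧸ I) (M ⧸ P) ≤ r := by
    have := finrank_le_of_span_eq_top hv'
    rw [Fintype.card_fin] at this
    omega
  have h0 := aux_nil Fb hFnil r hrk
  have h1 := hFpow r x
  rw [h0] at h1
  have h2 : (f ^ r) x ∈ P := by
    rw [← Submodule.Quotient.mk_eq_zero]; exact h1.symm
  have h3 : (f ^ r) x ∈ (Ideal.span {q} : Ideal D) • (⊤ : Submodule D M) := h2
  rw [Submodule.ideal_span_singleton_smul, Submodule.mem_smul_pointwise_iff_exists] at h3
  obtain ⟨y, _, hy⟩ := h3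
  exact ⟨y, hy.symm⟩

open Polynomial in
theorem aux_cyc {D : Type*} [CommRing D] [IsDomain D] [IsPrincipalIdealRing D]
    (q : D) (hq : Prime q) {N : Type*} [AddCommGroup N] [Module D N] (r : ℕ)
    (π : (Fin r → D) →ₗ[D] N) (hπ : Function.Surjective π)
    (δ : Module.End D N) (hδ : IsNilpotent δ) (a : N) :
    ∃ g : D[X], (δ ^ r) a = q • (aeval δ g) a := by
  let φ : D[X] →ₗ[D] N := (LinearMap.applyₗ a) ∘ₗ (aeval δ).toLinearMap
  have hφ : ∀ g, φ g = aeval δ g a := fun _ => rfl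
  let M := LinearMap.range φ
  have hM : ∀ x ∈ M, δ x ∈ M := by
    rintro _ ⟨g, rfl⟩
    exact ⟨X * g, by rw [hφ, hφ, map_mul, aeval_X]; rfl⟩
  let f : Module.End D M := δ.restrict hM
  have hpow : ∀ (k : ℕ) (z : M), ((f ^ k) z : N) = (δ ^ k) z := by
    intro k
    induction k with
    | zero => intro z; simp
    | succ k ih =>
      intro z
      rw [pow_succ, pow_succ, Module.End.mul_apply, Module.End.mul_apply, ih]
      rfl
  have hf : IsNilpotent f := by
    obtain ⟨k, hk⟩ := hδ
    refine ⟨k, ?_⟩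
    ext z
    rw [hpow, hk]; simp
  obtain ⟨⟨_, g, rfl⟩, hy⟩ := aux_rank q hq r π hπ M f hf ⟨a, 1, by simp [hφ]⟩
  refine ⟨g, ?_⟩
  have := congrArg Subtype.val hy
  rw [hpow] at this
  exact this

open Polynomial in
/-- sum of powers is `p` times a unipotent operator, when applied to `a` -/
theorem aux_sum {D : Type*} [CommRing D] [IsDomain D] [IsPrincipalIdealRing D]
    (p : ℕ) (hp : p.Prime) (hpD : Prime (p : D))
    {N : Type*} [AddCommGroup N] [Module D N] (r : ℕ) (hr : r < p - 1)
    (π : (Fin r → D) →ₗ[D] N) (hπ : Function.Surjective π)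
    (δ : Module.End D N) (hδ : IsNilpotent δ) (a : N) :
    ∃ u : Module.End D N, IsUnit u ∧ (∑ k ∈ Finset.range p, (δ + 1) ^ k) a = p • u a := by
  obtain ⟨g, hg⟩ := aux_cyc (p : D) hpD r π hπ δ hδ a
  have hpoly : ∃ h : D[X], ∑ k ∈ Finset.range p, (X + 1 : D[X]) ^ k
      = (p : D[X]) * (1 + X * h) + X ^ (p - 1) := by
    have h1 := geom_sum_X_comp_X_add_one_eq_sum (R := D) p
    rw [Polynomial.comp, eval₂_finsetSum] at h1
    simp only [eval₂_X_pow] at h1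
    rw [h1]
    obtain ⟨t, rfl⟩ : ∃ t, p = t + 2 := ⟨p - 2, by have := hp.two_le; omega⟩
    rw [Finset.sum_range_succ, Finset.sum_range_succ']
    have hd : ∀ k ∈ Finset.range t, ∃ e : ℕ, (t + 2).choose (k + 1 + 1) = (t + 2) * e := by
      intro k hk
      exact hp.dvd_choose_self (by omega) (by have := Finset.mem_range.1 hk; omega)
    choose! e he using hd
    refine ⟨∑ k ∈ Finset.range t, (e k : D[X]) * X ^ k, ?_⟩
    rw [mul_add, Finset.mul_sum, Finset.mul_sum]
    have : ∀ k ∈ Finset.range t, (((t + 2).choose (k + 1 + 1) : ℕ) : D[X]) * X ^ (k + 1)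
        = ((t + 2 : ℕ) : D[X]) * (X * ((e k : D[X]) * X ^ k)) := by
      intro k hk
      rw [he k hk]; push_cast; ring
    rw [Finset.sum_congr rfl this]
    simp
    ring
  obtain ⟨h, hh⟩ := hpoly
  let w : D[X] := h + X ^ (p - 2 - r) * g
  have hcomm : Commute δ (aeval δ w) := by
    have : Commute (aeval δ (X : D[X])) (aeval δ w) := by
      rw [commute_iff_eq, ← map_mul, ← map_mul, mul_comm]
    simpa using this
  refine ⟨1 + δ * aeval δ w, IsNilpotent.isUnit_one_add (hcomm.isNilpotent_mul_right hδ), ?_⟩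
  have h1 := congrArg (fun q => aeval δ q a) hh
  simp only [map_sum, map_pow, map_add, map_mul, map_one, aeval_X, map_natCast] at h1
  rw [h1]
  have h2 : p - 1 = 1 + (p - 2 - r) + r := by omega
  have h3 : (δ ^ (p - 1)) a = (p : D) • (δ * (δ ^ (p - 2 - r) * aeval δ g)) a := by
    rw [h2, pow_add, Module.End.mul_apply, hg, map_smul, pow_add, pow_one]
    rfl
  have hw : aeval δ w = aeval δ h + δ ^ (p - 2 - r) * aeval δ g := by simp [w]
  rw [LinearMap.add_apply, h3, hw, Module.End.mul_apply, Module.End.natCast_apply,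
    Nat.cast_smul_eq_nsmul, ← smul_add, mul_add, ← add_assoc, LinearMap.add_apply (1 + _)]

theorem aux_delta_nil {D : Type*} [CommRing D]
    (p : ℕ) (hp : p.Prime)
    {N : Type*} [AddCommGroup N] [Module D N] (m : ℕ) (hN : ∀ x : N, p ^ m • x = 0)
    (α : Module.End D N) (hα : α ^ (p ^ m) = 1) : IsNilpotent (α - 1) := by
  obtain ⟨s, hs⟩ := (Commute.one_right (α - 1)).exists_add_pow_prime_pow_eq hp m
  rw [sub_add_cancel, hα, one_pow] at hs
  have h1 : (α - 1) ^ (p ^ m) = (p : Module.End D N) * (-((α - 1) * s)) := by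
    have := hs
    simp only [mul_one, mul_assoc] at this
    rw [mul_neg, eq_neg_iff_add_eq_zero]
    have h2 : (1 : Module.End D N) = 1 + ((α - 1) ^ p ^ m + p * ((α - 1) * s)) := by
      refine this.trans ?_
      rw [add_comm _ (1 : Module.End D N), add_assoc]
    exact (left_eq_add.1 h2)
  refine ⟨p ^ m * m, ?_⟩
  rw [pow_mul, h1, (Nat.cast_commute p _).mul_pow]
  have h3 : ((p : Module.End D N)) ^ m = 0 := by
    ext x
    rw [← Nat.cast_pow, Module.End.natCast_apply, hN]; rfl
  rw [h3, zero_mul]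

namespace BraceStruct

variable {N : Type*} [AddCommGroup N] (B : BraceStruct N)

/-- The circle group of a brace. -/
abbrev circGroup : Group N where
  mul := B.circ
  one := 0
  inv := B.cinv
  mul_assoc := B.circ_assoc
  one_mul := B.zero_circ
  mul_one := B.circ_zero
  inv_mul_cancel := B.cinv_circ

theorem circPow_eq (n : ℕ) (a : N) : B.circPow n a = (letI := B.circGroup; a ^ n) := by
  letI := B.circGroup
  induction n with
  | zero => exact (pow_zero a).symm
  | succ n ih =>
    rw [pow_succ', ← ih]
    rfl

theorem circPow_mul (n k : ℕ) (a : N) : B.circPow (n * k) a = B.circPow k (B.circPow n a) := by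
  letI := B.circGroup
  rw [circPow_eq, circPow_eq, circPow_eq]
  exact pow_mul a n k

theorem circPow_card (a : N) : B.circPow (Nat.card N) a = 0 := by
  letI := B.circGroup
  rw [circPow_eq]
  exact pow_card_eq_one'

variable {D : Type*} [CommRing D] [Module D N]

/-- `γ_x` as a linear map. -/
def gammaLin (hB : B.IsRBrace D) (x : N) : Module.End D N where
  toFun := B.gamma x
  map_add' y z := by
    simp only [gamma, B.brace]; abel
  map_smul' r y := hB x r y

theorem gammaLin_apply (hB : B.IsRBrace D) (x y : N) : B.gammaLin hB x y = -x + B.circ x y := rfl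

theorem circ_eq (hB : B.IsRBrace D) (x y : N) : B.circ x y = x + B.gammaLin hB x y := by
  rw [gammaLin_apply]; abel

theorem gammaLin_circ (hB : B.IsRBrace D) (x y : N) :
    B.gammaLin hB (B.circ x y) = B.gammaLin hB x * B.gammaLin hB y := by
  ext z
  rw [Module.End.mul_apply, gammaLin_apply, B.circ_assoc, B.circ_eq hB x (B.circ y z),
    B.circ_eq hB y z, map_add, B.circ_eq hB x y]
  abel

theorem gammaLin_circPow (hB : B.IsRBrace D) (n : ℕ) (x : N) :
    B.gammaLin hB (B.circPow n x) = B.gammaLin hB x ^ n := by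
  induction n with
  | zero =>
    ext z
    show -0 + B.circ 0 z = _
    rw [B.zero_circ]; simp
  | succ n ih =>
    rw [pow_succ', ← ih, ← gammaLin_circ]; rfl

theorem circPow_eq_sum (hB : B.IsRBrace D) (n : ℕ) (x : N) :
    B.circPow n x = (∑ k ∈ Finset.range n, B.gammaLin hB x ^ k) x := by
  induction n with
  | zero => simp [circPow]
  | succ n ih =>
    rw [Finset.sum_range_succ', circPow, B.circ_eq hB, ih]
    simp only [pow_succ', ← Finset.mul_sum, pow_zero, LinearMap.add_apply, Module.End.mul_apply,
      Module.End.one_apply]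
    rw [add_comm]

theorem key [IsDomain D] [IsPrincipalIdealRing D] (hB : B.IsRBrace D)
    (p : ℕ) (hp : p.Prime) (hpD : Prime (p : D)) (m : ℕ) (hcard : Nat.card N = p ^ m)
    (r : ℕ) (hr : r < p - 1)
    (π : (Fin r → D) →ₗ[D] N) (hπ : Function.Surjective π) (i : ℕ) :
    ∀ a : N, p ^ i • a = 0 ↔ B.circPow (p ^ i) a = 0 := by
  have hN : ∀ x : N, p ^ m • x = 0 := fun x => by rw [← hcard]; exact card_nsmul_eq_zero'
  induction i with
  | zero =>
    intro a
    simp [circPow, B.circ_zero]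
  | succ i ih =>
    intro a
    have hα : B.gammaLin hB a ^ (p ^ m) = 1 := by
      rw [← gammaLin_circPow, ← hcard, circPow_card]
      exact B.gammaLin_circPow hB 0 a |>.trans (pow_zero _)
    obtain ⟨u, hu, hs⟩ := aux_sum p hp hpD r hr π hπ _ (aux_delta_nil p hp m hN _ hα) a
    rw [sub_add_cancel, ← circPow_eq_sum] at hs
    rw [pow_succ' p i, circPow_mul, ← ih, hs, smul_smul, ← pow_succ, ← pow_succ', ← map_nsmul]
    have hinj : Function.Injective u := ((Module.End.isUnit_iff u).1 hu).1
    rw [map_eq_zero_iff u hinj]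

end BraceStruct

theorem small_rank_D_brace
    {D : Type*} [CommRing D] [IsDomain D] [IsPrincipalIdealRing D]
    (p : ℕ) (hp : p.Prime) (hpD : Prime (p : D))
    {N : Type*} [AddCommGroup N] [Module D N]
    (B : BraceStruct N) (hB : B.IsRBrace D)
    (m : ℕ) (hcard : Nat.card N = p ^ m)
    (r : ℕ) (c : Fin r → ℕ) (hc : ∀ i, 1 ≤ c i)
    (hdec : Nonempty
      (N ≃ₗ[D] ((i : Fin r) → D ⧸ Ideal.span {(p : D) ^ c i})))
    (hrank : r < p - 1) :
    (∀ (i : ℕ) (a : N), p ^ (i + 1) • a = 0 → ¬ p ^ i • a = 0 →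
        B.circPow (p ^ (i + 1)) a = 0 ∧ ¬ B.circPow (p ^ i) a = 0) ∧
    (∀ i : ℕ, Set.ncard {a : N | p ^ i • a = 0}
        = Set.ncard {a : N | B.circPow (p ^ i) a = 0}) ∧
    ((∀ x y : N, B.circ x y = B.circ y x) →
      ∃ e : N ≃ N, ∀ x y : N, e (x + y) = B.circ (e x) (e y)) := by
  obtain ⟨E⟩ := hdec
  let q : (Fin r → D) →ₗ[D] ((i : Fin r) → D ⧸ Ideal.span {(p : D) ^ c i}) :=
    LinearMap.pi fun i => (Submodule.mkQ (Ideal.span {(p : D) ^ c i})) ∘ₗ LinearMap.proj i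
  have hq : Function.Surjective q := by
    intro y
    choose x hx using fun i => Ideal.Quotient.mk_surjective (y i)
    exact ⟨x, funext hx⟩
  let π : (Fin r → D) →ₗ[D] N := E.symm.toLinearMap ∘ₗ q
  have hπ : Function.Surjective π := E.symm.surjective.comp hq
  have hkey := B.key hB p hp hpD m hcard r hrank π hπ
  have hset : ∀ i : ℕ, {a : N | p ^ i • a = 0} = {a : N | B.circPow (p ^ i) a = 0} :=
    fun i => Set.ext fun a => hkey i a
  refine ⟨fun i a h1 h2 => ⟨(hkey _ _).1 h1, fun h => h2 ((hkey _ _).2 h)⟩,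
    fun i => by rw [hset], fun hcomm => ?_⟩
  have hN : ∀ x : N, p ^ m • x = 0 := fun x => by rw [← hcard]; exact card_nsmul_eq_zero'
  have hfin : Finite N := Nat.finite_of_card_ne_zero (by rw [hcard]; exact pow_ne_zero _ hp.ne_zero)
  let C : CommGroup N := { B.circGroup with mul_comm := hcomm }
  have hpow : ∀ (n : ℕ) (a : N), B.circPow n a = (C.toGroup.toDivInvMonoid.toMonoid.npow n a) :=
    fun n a => B.circPow_eq n a
  obtain ⟨e⟩ := @aux_iso N (Additive N) _ (@Additive.addCommGroup N C) hfin hfin p m hp hN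
    (fun g => (hpow (p ^ m) g).symm.trans ((hkey m g).1 (hN g)))
    (fun i => by
      rw [hset]
      congr 1
      ext a
      show B.circPow (p ^ i) a = 0 ↔ C.toGroup.toDivInvMonoid.toMonoid.npow (p ^ i) a = 0
      rw [hpow])
  exact ⟨e.toEquiv, fun x y => e.map_add' x y⟩
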